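/- arXiv:2605.19822 — 3 statements merged into one kernel-verified Lean document; each statement's English description precedes it below -/
import Mathlib

section
/- Data processing inequality for a Markov chain X → Z → W on finite types: let p_X be a pmf on a finite type X, let k assign to each x a pmf k(·|x) on a finite type Z, and let m assign to each z a pmf m(·|z) on a finite type W. Define the joint pmf p(x,z,w) = p_X(x)·k(z|x)·m(w|z) on X × Z × W. Then the mutual information between X and W under the (X,W)-marginal of p is at most the mutual information between X and Z under the (X,Z)-marginal of p: I(X;W) ≤ I(X;Z). -/
/-! The chain of comparisons is `I(X;W) ≤ I(X;(Z,W)) = I(X;Z)`. The inequality is the log-sum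
inequality, applied for each `(x, w)` to the sum over `z`. The equality holds because, under the
Markov property, the density of `p(x,z,w)` with respect to `p_X(x) p(z,w)` does not depend on `w`:
the factor `m(w|z)` cancels. -/

/-- The mutual information `I(X;Y)` of nonnegative weights `p x y`, which need not sum to `1`: the
divergence of `p` from the product of its marginals. The convention `0 * log _ = 0` is automatic. -/
noncomputable def mutualInfo {X Y : Type*} [Fintype X] [Fintype Y] (p : X → Y → ℝ) : ℝ :=
  ∑ x, ∑ y, p x y * Real.log (p x y / ((∑ y', p x y') * ∑ x', p x' y))

theorem sum_mul_log_sum_div_sum_le {ι : Type*} {s : Finset ι} {a b : ι → ℝ}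
    (ha : ∀ i ∈ s, 0 ≤ a i) (hb : ∀ i ∈ s, 0 ≤ b i) (hab : ∀ i ∈ s, b i = 0 → a i = 0) :
    (∑ i ∈ s, a i) * Real.log ((∑ i ∈ s, a i) / ∑ i ∈ s, b i) ≤
      ∑ i ∈ s, a i * Real.log (a i / b i) := by
  have hcancel : ∀ i ∈ s, b i * (a i / b i) = a i := fun i hi =>
    mul_div_cancel_of_imp' (hab i hi)
  rcases (Finset.sum_nonneg hb).eq_or_lt with hB | hB
  · have ha0 : ∀ i ∈ s, a i = 0 := fun i hi =>
      hab i hi ((Finset.sum_eq_zero_iff_of_nonneg hb).1 hB.symm i hi)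
    rw [Finset.sum_eq_zero ha0, zero_mul]
    exact (Finset.sum_eq_zero fun i hi => by rw [ha0 i hi, zero_mul]).ge
  -- Jensen's inequality for `t ↦ t * log t` at the points `a i / b i` with weights `b i`.
  have hjensen := Real.convexOn_mul_log.map_centerMass_le hb hB
    fun i hi => div_nonneg (ha i hi) (hb i hi)
  simp only [Finset.centerMass, smul_eq_mul, Function.comp_apply, ← mul_assoc] at hjensen
  rw [Finset.sum_congr rfl hcancel, inv_mul_eq_div, div_mul_eq_mul_div, inv_mul_eq_div,
    div_le_div_iff_of_pos_right hB] at hjensen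
  exact hjensen.trans_eq (Finset.sum_congr rfl fun i hi => by rw [hcancel i hi])

section

variable {X Z W : Type*} [Fintype X] [Fintype Z] [Fintype W]

theorem eq_zero_of_marginal_mul_marginal_eq_zero {p : X → Z → ℝ} (hp : ∀ x z, 0 ≤ p x z)
    {x : X} {z : Z} (h : (∑ z', p x z') * ∑ x', p x' z = 0) : p x z = 0 := by
  rcases mul_eq_zero.1 h with hrow | hcol
  · exact (Finset.sum_eq_zero_iff_of_nonneg fun z' _ => hp x z').1 hrow z (Finset.mem_univ z)
  · exact (Finset.sum_eq_zero_iff_of_nonneg fun x' _ => hp x' z).1 hcol x (Finset.mem_univ x)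

theorem mutualInfo_marginal_le {p : X → Z × W → ℝ} (hp : ∀ x y, 0 ≤ p x y) :
    mutualInfo (fun x w => ∑ z, p x (z, w)) ≤ mutualInfo p := by
  have hrow : ∀ x, ∑ w, ∑ z, p x (z, w) = ∑ y, p x y := fun x =>
    (Fintype.sum_prod_type_right _).symm
  have hprod : ∀ x w, (∑ y, p x y) * ∑ x', ∑ z, p x' (z, w) =
      ∑ z, (∑ y, p x y) * ∑ x', p x' (z, w) := fun x w => by
    rw [Finset.sum_comm, Finset.mul_sum]
  have hprod_nonneg : ∀ x y, 0 ≤ (∑ y', p x y') * ∑ x', p x' y := fun x y =>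
    mul_nonneg (Finset.sum_nonneg fun y' _ => hp x y') (Finset.sum_nonneg fun x' _ => hp x' y)
  simp only [mutualInfo, hrow, hprod]
  refine Finset.sum_le_sum fun x _ => ?_
  calc ∑ w, (∑ z, p x (z, w)) *
        Real.log ((∑ z, p x (z, w)) / ∑ z, (∑ y, p x y) * ∑ x', p x' (z, w))
    _ ≤ ∑ w, ∑ z, p x (z, w) *
        Real.log (p x (z, w) / ((∑ y, p x y) * ∑ x', p x' (z, w))) :=
      Finset.sum_le_sum fun w _ => sum_mul_log_sum_div_sum_le (fun z _ => hp x (z, w))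
        (fun z _ => hprod_nonneg x (z, w)) fun z _ => eq_zero_of_marginal_mul_marginal_eq_zero hp
    _ = ∑ y, p x y * Real.log (p x y / ((∑ y', p x y') * ∑ x', p x' y)) := by
      simp only [Fintype.sum_prod_type_right]

theorem mutualInfo_eq_of_markov (q : X → Z → ℝ) {m : Z → W → ℝ} (hm : ∀ z w, 0 ≤ m z w) :
    mutualInfo (fun x (y : Z × W) => q x y.1 * m y.1 y.2) =
      mutualInfo (fun x z => ∑ w, q x z * m z w) := by
  have hsum : ∀ z w, m z w ≠ 0 → ∑ w', m z w' ≠ 0 := fun z w h h0 =>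
    h ((Finset.sum_eq_zero_iff_of_nonneg fun w' _ => hm z w').1 h0 w (Finset.mem_univ w))
  simp only [mutualInfo, Fintype.sum_prod_type]
  refine Finset.sum_congr rfl fun x _ => Finset.sum_congr rfl fun z _ => ?_
  rw [Finset.sum_mul]
  refine Finset.sum_congr rfl fun w _ => ?_
  by_cases h : m z w = 0
  · simp only [h, mul_zero, zero_mul]
  -- Both densities reduce to `q x z / (p_X x * ∑ x', q x' z)`.
  · simp only [← Finset.sum_mul, ← Finset.mul_sum, ← mul_assoc]
    rw [mul_div_mul_right _ _ h, mul_div_mul_right _ _ (hsum z w h)]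

theorem data_processing_inequality_general {q : X → Z → ℝ} {m : Z → W → ℝ}
    (hq : ∀ x z, 0 ≤ q x z) (hm : ∀ z w, 0 ≤ m z w) :
    mutualInfo (fun x w => ∑ z, q x z * m z w) ≤ mutualInfo (fun x z => ∑ w, q x z * m z w) :=
  calc mutualInfo (fun x w => ∑ z, q x z * m z w)
    _ ≤ mutualInfo (fun x (y : Z × W) => q x y.1 * m y.1 y.2) :=
      mutualInfo_marginal_le (p := fun x y => q x y.1 * m y.1 y.2) fun x y =>
        mul_nonneg (hq x y.1) (hm y.1 y.2)
    _ = mutualInfo (fun x z => ∑ w, q x z * m z w) := mutualInfo_eq_of_markov q hm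

end

/-- Data processing inequality for a Markov chain `X → Z → W` on finite types:
`I(X;W) ≤ I(X;Z)`. -/
theorem data_processing_inequality
    {X Z W : Type*} [Fintype X] [Fintype Z] [Fintype W]
    (pX : X → ℝ) (k : X → Z → ℝ) (m : Z → W → ℝ)
    (hX0 : ∀ x, 0 ≤ pX x) (hX1 : ∑ x : X, pX x = 1)
    (hk0 : ∀ x z, 0 ≤ k x z) (hk1 : ∀ x, ∑ z : Z, k x z = 1)
    (hm0 : ∀ z w, 0 ≤ m z w) (hm1 : ∀ z, ∑ w : W, m z w = 1) :
    (∑ x : X, ∑ w : W, (∑ z : Z, pX x * k x z * m z w) *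
        Real.log ((∑ z : Z, pX x * k x z * m z w) /
          ((∑ w' : W, ∑ z : Z, pX x * k x z * m z w') *
            (∑ x' : X, ∑ z : Z, pX x' * k x' z * m z w))))
      ≤
    (∑ x : X, ∑ z : Z, (∑ w : W, pX x * k x z * m z w) *
        Real.log ((∑ w : W, pX x * k x z * m z w) /
          ((∑ z' : Z, ∑ w : W, pX x * k x z' * m z' w) *
            (∑ x' : X, ∑ w : W, pX x' * k x' z * m z w)))) :=
  data_processing_inequality_general (fun x z => mul_nonneg (hX0 x) (hk0 x z)) hm0
end

section
/- Optimality of the density-ratio discriminator: let P and Q be strictly positive pmfs on a finite type X, and define d*(x) = P(x)/(P(x)+Q(x)), which takes values in the open interval (0,1). Then for every function d : X → (0,1), Σ_x P(x)·log d(x) + Σ_x Q(x)·log(1−d(x)) ≤ Σ_x P(x)·log d*(x) + Σ_x Q(x)·log(1−d*(x)); that is, d* maximizes the binary cross-entropy discrimination objective between P and Q. -/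
/-!
The summand at `x` is `P x + Q x` times the negative cross entropy of the Bernoulli distribution
with parameter `d x` relative to the one with parameter `P x / (P x + Q x)`. By Gibbs' inequality
this is largest when the two parameters agree.
-/

theorem mul_log_le_mul_log_self_add_sub {a b : ℝ} (ha : 0 ≤ a) (hb : 0 < b) :
    a * Real.log b ≤ a * Real.log a + (b - a) := by
  rcases ha.eq_or_lt with rfl | ha
  · simpa using hb.le
  · have log_ratio_le : Real.log b - Real.log a ≤ b / a - 1 := by
      rw [← Real.log_div hb.ne' ha.ne']
      exact Real.log_le_sub_one_of_pos (div_pos hb ha)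
    calc
      a * Real.log b = a * Real.log a + a * (Real.log b - Real.log a) := by ring
      _ ≤ a * Real.log a + a * (b / a - 1) := by gcongr
      _ = a * Real.log a + (b - a) := by rw [mul_sub, mul_div_cancel₀ b ha.ne', mul_one]

theorem bernoulli_gibbs_inequality {s t : ℝ} (hs : s ∈ Set.Icc 0 1) (ht : t ∈ Set.Ioo 0 1) :
    s * Real.log t + (1 - s) * Real.log (1 - t)
      ≤ s * Real.log s + (1 - s) * Real.log (1 - s) := by
  have success := mul_log_le_mul_log_self_add_sub hs.1 ht.1
  have failure := mul_log_le_mul_log_self_add_sub (sub_nonneg.2 hs.2) (sub_pos.2 ht.2)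
  linarith

theorem mul_log_add_mul_log_one_sub_le {p q t : ℝ} (hp : 0 ≤ p) (hq : 0 ≤ q)
    (ht : t ∈ Set.Ioo 0 1) :
    p * Real.log t + q * Real.log (1 - t)
      ≤ p * Real.log (p / (p + q)) + q * Real.log (1 - p / (p + q)) := by
  set s := p / (p + q)
  have hs : s ∈ Set.Icc 0 1 :=
    ⟨by positivity, div_le_one_of_le₀ (le_add_of_nonneg_right hq) (add_nonneg hp hq)⟩
  have hp_eq : (p + q) * s = p :=
    mul_div_cancel_of_imp' fun h => ((add_eq_zero_iff_of_nonneg hp hq).1 h).1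
  have hq_eq : (p + q) * (1 - s) = q := by linarith
  have factor (u v : ℝ) : p * u + q * v = (p + q) * (s * u + (1 - s) * v) := by
    rw [mul_add, ← mul_assoc, ← mul_assoc, hp_eq, hq_eq]
  rw [factor, factor]
  exact mul_le_mul_of_nonneg_left (bernoulli_gibbs_inequality hs ht) (add_nonneg hp hq)

theorem div_add_mem_Ioo {p q : ℝ} (hp : 0 < p) (hq : 0 < q) : p / (p + q) ∈ Set.Ioo 0 1 :=
  ⟨by positivity, (div_lt_one (add_pos hp hq)).2 (lt_add_of_pos_right p hq)⟩

theorem density_ratio_discriminator_optimal_general {X : Type*} (s : Finset X) (P Q : X → ℝ)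
    (hP : ∀ x ∈ s, 0 ≤ P x) (hQ : ∀ x ∈ s, 0 ≤ Q x) :
    (∀ x, 0 < P x → 0 < Q x → P x / (P x + Q x) ∈ Set.Ioo 0 1) ∧
    ∀ d : X → ℝ, (∀ x ∈ s, d x ∈ Set.Ioo 0 1) →
      (∑ x ∈ s, P x * Real.log (d x)) + (∑ x ∈ s, Q x * Real.log (1 - d x))
        ≤ (∑ x ∈ s, P x * Real.log (P x / (P x + Q x)))
          + (∑ x ∈ s, Q x * Real.log (1 - P x / (P x + Q x))) := by
  refine ⟨fun _ hPx hQx => div_add_mem_Ioo hPx hQx, fun d hd => ?_⟩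
  rw [← Finset.sum_add_distrib, ← Finset.sum_add_distrib]
  exact Finset.sum_le_sum fun x hx => mul_log_add_mul_log_one_sub_le (hP x hx) (hQ x hx) (hd x hx)

/-- Optimality of the density-ratio discriminator `d*(x) = P(x)/(P(x)+Q(x))`:
it takes values in `(0,1)` and maximizes the binary cross-entropy
discrimination objective between `P` and `Q`. -/
theorem density_ratio_discriminator_optimal
    {X : Type*} [Fintype X]
    (P Q : X → ℝ)
    (hP0 : ∀ x, 0 < P x) (hP1 : ∑ x : X, P x = 1)
    (hQ0 : ∀ x, 0 < Q x) (hQ1 : ∑ x : X, Q x = 1) :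
    (∀ x, 0 < P x / (P x + Q x) ∧ P x / (P x + Q x) < 1)
    ∧
    (∀ d : X → ℝ, (∀ x, 0 < d x ∧ d x < 1) →
      (∑ x : X, P x * Real.log (d x)) + (∑ x : X, Q x * Real.log (1 - d x))
        ≤ (∑ x : X, P x * Real.log (P x / (P x + Q x)))
          + (∑ x : X, Q x * Real.log (1 - P x / (P x + Q x)))) := by
  obtain ⟨hrange, hopt⟩ := density_ratio_discriminator_optimal_general Finset.univ P Q
    (fun x _ => (hP0 x).le) (fun x _ => (hQ0 x).le)
  exact ⟨fun x => hrange x (hP0 x) (hQ0 x), fun d hd => hopt d fun x _ => hd x⟩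
end

section
/- Variational representation of the Jensen–Shannon divergence: let P and Q be strictly positive pmfs on a finite type X, let M = (P+Q)/2, and define the Jensen–Shannon divergence JS(P‖Q) = (1/2)·D(P‖M) + (1/2)·D(Q‖M). Then the supremum over all discriminators d : X → (0,1) of the objective Σ_x P(x)·log d(x) + Σ_x Q(x)·log(1−d(x)) equals 2·JS(P‖Q) − 2·log 2, and this supremum is attained at d*(x) = P(x)/(P(x)+Q(x)). Equivalently, JS(P‖Q) = log 2 + (1/2)·sup_d ( Σ_x P(x)·log d(x) + Σ_x Q(x)·log(1−d(x)) ). -/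
/-!
Put `S = P + Q`. For a discriminator `d`, the objective equals
`D(P‖S) + D(Q‖S) - (D(P‖S d) + D(Q‖S (1 - d)))`. The weights `S d` and `S (1 - d)` have the same
joint total mass as `P` and `Q`, so the subtracted term is nonnegative by Gibbs' inequality, and it
vanishes at `d = P / S`, where `S d = P` and `S (1 - d) = Q`. Passing from `S` to the mixture
`S / 2` adds `log 2` to each of the two divergences.
-/

open Finset

lemma sub_le_mul_log_div {a b : ℝ} (ha : 0 ≤ a) (hb : 0 < b) : a - b ≤ a * Real.log (a / b) := by
  have h : 0 ≤ b * InformationTheory.klFun (a / b) :=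
    mul_nonneg hb.le (InformationTheory.klFun_nonneg (div_nonneg ha hb.le))
  have h_eq : b * InformationTheory.klFun (a / b) = a * Real.log (a / b) + b - a := by
    rw [InformationTheory.klFun]
    field_simp
  linarith

section Divergence

variable {X : Type*} [Fintype X]

/-- The Kullback–Leibler divergence `D(p‖q)` of weights on a finite type. The weights need not be
normalized. Terms with `p x = 0` vanish; `q x = 0` gives a junk value. -/
noncomputable def klDivergence (p q : X → ℝ) : ℝ :=
  ∑ x, p x * Real.log (p x / q x)

/-- The Jensen–Shannon divergence `JS(P‖Q)` of weights on a finite type, which need not be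
normalized. -/
noncomputable def jsDivergence (P Q : X → ℝ) : ℝ :=
  (1 / 2) * klDivergence P ((P + Q) / 2) + (1 / 2) * klDivergence Q ((P + Q) / 2)

/-- The objective of a discriminator `d` that is to tell samples of `P` (where `d` should be close
to `1`) from samples of `Q` (where `d` should be close to `0`). -/
noncomputable def discriminationObjective (P Q d : X → ℝ) : ℝ :=
  (∑ x, P x * Real.log (d x)) + ∑ x, Q x * Real.log (1 - d x)

lemma klDivergence_mul_right (p : X → ℝ) {q r : X → ℝ} (hq : ∀ x, q x ≠ 0) (hr : ∀ x, r x ≠ 0) :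
    klDivergence p (q * r) = klDivergence p q - ∑ x, p x * Real.log (r x) := by
  rw [klDivergence, klDivergence, ← sum_sub_distrib]
  refine sum_congr rfl fun x _ => ?_
  obtain hp | hp := eq_or_ne (p x) 0
  · simp [hp]
  · rw [Pi.mul_apply, ← div_div, Real.log_div (div_ne_zero hp (hq x)) (hr x), mul_sub]

lemma klDivergence_div_two_right (p : X → ℝ) {q : X → ℝ} (hq : ∀ x, q x ≠ 0) :
    klDivergence p (q / 2) = klDivergence p q + (∑ x, p x) * Real.log 2 := by
  rw [div_eq_mul_inv, klDivergence_mul_right p hq (by simp)]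
  simp [sum_mul]

lemma sum_sub_sum_le_klDivergence {p q : X → ℝ} (hp : ∀ x, 0 ≤ p x) (hq : ∀ x, 0 < q x) :
    ∑ x, p x - ∑ x, q x ≤ klDivergence p q := by
  rw [← sum_sub_distrib]
  exact sum_le_sum fun x _ => sub_le_mul_log_div (hp x) (hq x)

lemma discriminationObjective_eq_sub (P Q : X → ℝ) {S d : X → ℝ} (hS : ∀ x, S x ≠ 0)
    (hd₀ : ∀ x, d x ≠ 0) (hd₁ : ∀ x, d x ≠ 1) :
    discriminationObjective P Q d = klDivergence P S + klDivergence Q S -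
      (klDivergence P (S * d) + klDivergence Q (S * (1 - d))) := by
  have h_one_sub : ∀ x, (1 - d) x ≠ 0 := fun x => sub_ne_zero.2 (hd₁ x).symm
  rw [klDivergence_mul_right P hS hd₀, klDivergence_mul_right Q hS h_one_sub,
    discriminationObjective]
  simp only [Pi.sub_apply, Pi.one_apply]
  ring

lemma discriminationObjective_le {P Q d : X → ℝ} (hP : ∀ x, 0 ≤ P x) (hQ : ∀ x, 0 ≤ Q x)
    (hS : ∀ x, 0 < (P + Q) x) (hd : ∀ x, 0 < d x ∧ d x < 1) :
    discriminationObjective P Q d ≤ klDivergence P (P + Q) + klDivergence Q (P + Q) := by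
  have h_mass : ∑ x, ((P + Q) * d) x + ∑ x, ((P + Q) * (1 - d)) x = ∑ x, P x + ∑ x, Q x := by
    simp only [← sum_add_distrib, ← Pi.add_apply, ← mul_add, add_sub_cancel, mul_one]
  have h_gibbs_P : ∑ x, P x - ∑ x, ((P + Q) * d) x ≤ klDivergence P ((P + Q) * d) :=
    sum_sub_sum_le_klDivergence hP fun x => mul_pos (hS x) (hd x).1
  have h_gibbs_Q : ∑ x, Q x - ∑ x, ((P + Q) * (1 - d)) x ≤ klDivergence Q ((P + Q) * (1 - d)) :=
    sum_sub_sum_le_klDivergence hQ fun x => mul_pos (hS x) (sub_pos.2 (hd x).2)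
  rw [discriminationObjective_eq_sub P Q (fun x => (hS x).ne') (fun x => (hd x).1.ne')
    fun x => (hd x).2.ne]
  linarith

lemma discriminationObjective_div_add {P Q : X → ℝ} (hS : ∀ x, (P + Q) x ≠ 0) :
    discriminationObjective P Q (P / (P + Q)) =
      klDivergence P (P + Q) + klDivergence Q (P + Q) := by
  have h_compl : ∀ x, 1 - P x / (P + Q) x = Q x / (P + Q) x := fun x => by
    rw [one_sub_div (hS x), Pi.add_apply, add_sub_cancel_left]
  simp only [discriminationObjective, klDivergence, Pi.div_apply, h_compl]

lemma two_mul_jsDivergence {P Q : X → ℝ} (hS : ∀ x, (P + Q) x ≠ 0) :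
    2 * jsDivergence P Q = klDivergence P (P + Q) + klDivergence Q (P + Q) +
      (∑ x, P x + ∑ x, Q x) * Real.log 2 := by
  rw [jsDivergence, klDivergence_div_two_right P hS, klDivergence_div_two_right Q hS]
  ring

theorem js_variational_representation_general {P Q : X → ℝ}
    (hP : ∀ x, 0 < P x) (hQ : ∀ x, 0 < Q x) :
    IsGreatest
      {v : ℝ | ∃ d : X → ℝ, (∀ x, 0 < d x ∧ d x < 1) ∧ v = discriminationObjective P Q d}
      (discriminationObjective P Q (P / (P + Q))) ∧
    discriminationObjective P Q (P / (P + Q)) =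
      2 * jsDivergence P Q - (∑ x, P x + ∑ x, Q x) * Real.log 2 := by
  have hS : ∀ x, 0 < (P + Q) x := fun x => add_pos (hP x) (hQ x)
  have h_opt : discriminationObjective P Q (P / (P + Q)) =
      klDivergence P (P + Q) + klDivergence Q (P + Q) :=
    discriminationObjective_div_add fun x => (hS x).ne'
  refine ⟨⟨⟨P / (P + Q), fun x => ⟨div_pos (hP x) (hS x), ?_⟩, rfl⟩, ?_⟩, ?_⟩
  · exact (div_lt_one (hS x)).2 (lt_add_of_pos_right _ (hQ x))
  · rintro _ ⟨d, hd, rfl⟩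
    rw [h_opt]
    exact discriminationObjective_le (fun x => (hP x).le) (fun x => (hQ x).le) hS hd
  · rw [h_opt, two_mul_jsDivergence fun x => (hS x).ne', add_sub_cancel_right]

end Divergence

/-- Variational representation of the Jensen–Shannon divergence: the supremum
of the discrimination objective over discriminators `d : X → (0,1)` is attained
at `d*(x) = P(x)/(P(x)+Q(x))` and equals `2·JS(P‖Q) − 2·log 2`. -/
theorem js_variational_representation
    {X : Type*} [Fintype X]
    (P Q : X → ℝ)
    (hP0 : ∀ x, 0 < P x) (hP1 : ∑ x : X, P x = 1)
    (hQ0 : ∀ x, 0 < Q x) (hQ1 : ∑ x : X, Q x = 1) :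
    IsGreatest
      {v : ℝ | ∃ d : X → ℝ, (∀ x, 0 < d x ∧ d x < 1) ∧
        v = (∑ x : X, P x * Real.log (d x)) + (∑ x : X, Q x * Real.log (1 - d x))}
      ((∑ x : X, P x * Real.log (P x / (P x + Q x)))
        + (∑ x : X, Q x * Real.log (1 - P x / (P x + Q x))))
    ∧
    ((∑ x : X, P x * Real.log (P x / (P x + Q x)))
        + (∑ x : X, Q x * Real.log (1 - P x / (P x + Q x))))
      = 2 * ((1 / 2) * (∑ x : X, P x * Real.log (P x / ((P x + Q x) / 2)))
            + (1 / 2) * (∑ x : X, Q x * Real.log (Q x / ((P x + Q x) / 2))))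
        - 2 * Real.log 2 := by
  have h := js_variational_representation_general hP0 hQ0
  rwa [hP1, hQ1, one_add_one_eq_two] at h
end
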